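/- arXiv:2406.15587 — 2 statements merged into one kernel-verified Lean document; each statement's English description precedes it below -/
import Mathlib

section
/- For every mu in the open interval (0.455, 0.705), the mixture p_mu := mu*p_PS(V = 1/sqrt(2), p_ps = 1/4) + (1-mu)*p_local is minimally network nonclassical in the minimal 3-chain scenario: p_mu does not belong to S0, while p_mu belongs to both S1^[AB^O BC^L] and S1^[AB^L BC^O]. -/
open Finset

/-- A correlation in the minimal 3-chain scenario: `p a b c x z = p(a,b,c|x,z)`. -/
abbrev Corr : Type := Fin 2 → Fin 2 → Fin 2 → Fin 2 → Fin 2 → ℝ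

/-- `p` is a valid correlation: nonnegative and normalized for every input pair. -/
def IsCorrelation (p : Corr) : Prop :=
  (∀ a b c x z, 0 ≤ p a b c x z) ∧
  (∀ x z, ∑ a : Fin 2, ∑ b : Fin 2, ∑ c : Fin 2, p a b c x z = 1)

/-- Probability weights on the finite set `Fin n`. -/
def IsWeights {n : ℕ} (q : Fin n → ℝ) : Prop :=
  (∀ l, 0 ≤ q l) ∧ ∑ l, q l = 1

/-- A no-signalling box with binary outputs and input sets `X`, `Y`. -/
def IsNSBox {X Y : Type} [Fintype X] [Fintype Y]
    (nb : Fin 2 → Fin 2 → X → Y → ℝ) : Prop :=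
  (∀ o1 o2 x y, 0 ≤ nb o1 o2 x y) ∧
  (∀ x y, ∑ o1 : Fin 2, ∑ o2 : Fin 2, nb o1 o2 x y = 1) ∧
  (∀ o1 x y y', ∑ o2 : Fin 2, nb o1 o2 x y = ∑ o2 : Fin 2, nb o1 o2 x y') ∧
  (∀ o2 x x' y, ∑ o1 : Fin 2, nb o1 o2 x y = ∑ o1 : Fin 2, nb o1 o2 x' y)

/-- `S0`: classical 3-chain correlations. -/
def MemS0 (p : Corr) : Prop :=
  ∃ (n1 n2 : ℕ) (q1 : Fin n1 → ℝ) (q2 : Fin n2 → ℝ)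
    (pA : Fin 2 → Fin 2 → Fin n1 → ℝ)
    (pB : Fin 2 → Fin n1 → Fin n2 → ℝ)
    (pC : Fin 2 → Fin 2 → Fin n2 → ℝ),
    IsWeights q1 ∧ IsWeights q2 ∧
    (∀ a x l1, 0 ≤ pA a x l1) ∧ (∀ x l1, ∑ a : Fin 2, pA a x l1 = 1) ∧
    (∀ b l1 l2, 0 ≤ pB b l1 l2) ∧ (∀ l1 l2, ∑ b : Fin 2, pB b l1 l2 = 1) ∧
    (∀ c z l2, 0 ≤ pC c z l2) ∧ (∀ z l2, ∑ c : Fin 2, pC c z l2 = 1) ∧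
    (∀ a b c x z, p a b c x z =
      ∑ l1, ∑ l2, q1 l1 * q2 l2 * pA a x l1 * pB b l1 l2 * pC c z l2)

/-- `S1^[AB^O BC^L]`: a no-signalling (OPT) source between Alice and Bob,
a classical source between Bob and Charlie. -/
def MemS1ABo (p : Corr) : Prop :=
  ∃ (n : ℕ) (q : Fin n → ℝ)
    (nb : Fin 2 → Fin 2 → Fin 2 → Fin n → ℝ)
    (pC : Fin 2 → Fin 2 → Fin n → ℝ),
    IsWeights q ∧ IsNSBox nb ∧
    (∀ c z l, 0 ≤ pC c z l) ∧ (∀ z l, ∑ c : Fin 2, pC c z l = 1) ∧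
    (∀ a b c x z, p a b c x z = ∑ l, q l * nb a b x l * pC c z l)

/-- `S1^[AB^L BC^O]`: a classical source between Alice and Bob,
a no-signalling (OPT) source between Bob and Charlie. -/
def MemS1BCo (p : Corr) : Prop :=
  ∃ (n : ℕ) (q : Fin n → ℝ)
    (pA : Fin 2 → Fin 2 → Fin n → ℝ)
    (nb : Fin 2 → Fin 2 → Fin n → Fin 2 → ℝ),
    IsWeights q ∧
    (∀ a x l, 0 ≤ pA a x l) ∧ (∀ x l, ∑ a : Fin 2, pA a x l = 1) ∧
    IsNSBox nb ∧
    (∀ a b c x z, p a b c x z = ∑ l, q l * pA a x l * nb b c l z)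

/-- `S2`: the no-signalling constraints of the 3-chain network. -/
def MemS2 (p : Corr) : Prop :=
  (∃ (pA : Fin 2 → Fin 2 → ℝ) (pC : Fin 2 → Fin 2 → ℝ),
    (∀ a x, 0 ≤ pA a x) ∧ (∀ x, ∑ a : Fin 2, pA a x = 1) ∧
    (∀ c z, 0 ≤ pC c z) ∧ (∀ z, ∑ c : Fin 2, pC c z = 1) ∧
    (∀ a c x z, ∑ b : Fin 2, p a b c x z = pA a x * pC c z)) ∧
  (∀ a b x z z', ∑ c : Fin 2, p a b c x z = ∑ c : Fin 2, p a b c x z') ∧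
  (∀ b c x x' z, ∑ a : Fin 2, p a b c x z = ∑ a : Fin 2, p a b c x' z)

/-- Noisy PR-box correlation `p_PR(V)(a,c|x,z) = (1 + V(-1)^{a+c+x·z})/4`. -/
noncomputable def pPR (V : ℝ) (a c x z : Fin 2) : ℝ :=
  (1 + V * (-1 : ℝ) ^ ((a : ℕ) + (c : ℕ) + (x : ℕ) * (z : ℕ))) / 4

/-- Post-selection box `p_PS(V, p_ps)`: outcome `b = 0` carries `p_ps · p_PR(V)`. -/
noncomputable def pPSbox (V pps : ℝ) : Corr := fun a b c x z =>
  if b = 0 then pps * pPR V a c x z else 1/4 - pps * pPR V a c x z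

/-- The local Bell-test correlation `p_local(a,b,c|x,z) = (1/2)·w(a,b|x,c)`. -/
noncomputable def pLocal : Corr := fun a b c x _z =>
  (1/2) * (if x ≠ c then (1/4 : ℝ) else if a = b then 1/2 else 0)

/-- The mixture `p_μ = μ·p_PS(V, 1/4) + (1-μ)·p_local`. -/
noncomputable def pMix (V μ : ℝ) : Corr := fun a b c x z =>
  μ * pPSbox V (1/4) a b c x z + (1 - μ) * pLocal a b c x z

/-!
In a classical model, moving all local randomness into the two sources makes Alice's and Charlie's
answers to both inputs independent random functions `f` and `g`. Union bounds then dominate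
differences of entries of `p` by products of a probability of an event for `f` and one for `g`. For
uniform answers these probabilities depend only on `r = P(f = (0, 0))` and `t = P(g = (0, 0))`, and
eliminating `t` leaves a quadratic inequality in `r`. For `p_μ` it fails on the whole range of `r`
that a third bound permits.

With one no-signalling source, the remaining end party can be taken to answer by a uniformly random
function, which Bob learns. The box then has unbiased outcomes at the other end, so it is described
by Bob's bias and one correlator per input, on which reproducing `p_μ` imposes linear equations.
-/

/-- A local deterministic strategy: the outcome predetermined for each input. -/
abbrev Response : Type := Fin 2 → Fin 2

/-- The responses that answer `o` on input `i`. -/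
def responsesWith (i o : Fin 2) : Finset Response := {f | f i = o}

lemma sum_response (F : Response → ℝ) :
    ∑ f, F f = F ![0, 0] + F ![0, 1] + F ![1, 0] + F ![1, 1] := by
  rw [← (finTwoArrowEquiv (Fin 2)).symm.sum_comp]
  simp [Fintype.sum_prod_type, Fin.sum_univ_two, add_assoc]

section Fine

variable {ι κ : Type*} [Fintype ι] [DecidableEq ι] [Fintype κ] {k : ι → κ → ℝ}

lemma prod_mem_stdSimplex (hk : ∀ i, k i ∈ stdSimplex ℝ κ) :
    (fun f : ι → κ => ∏ i, k i (f i)) ∈ stdSimplex ℝ (ι → κ) :=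
  ⟨fun _ => Finset.prod_nonneg fun i _ => (hk i).1 _, by
    simp only [← Fintype.prod_sum, (hk _).2, Finset.prod_const_one]⟩

lemma sum_prod_filter_apply_eq [DecidableEq κ] (hk : ∀ i, k i ∈ stdSimplex ℝ κ) (i : ι) (o : κ) :
    ∑ f : ι → κ with f i = o, ∏ j, k j (f j) = k i o := by
  have hpi : ({f | f i = o} : Finset (ι → κ)) =
      Fintype.piFinset (Function.update (fun _ : ι => (Finset.univ : Finset κ)) i {o}) := by
    rw [Fintype.piFinset_update_singleton_eq_filter_piFinset_eq (fun _ : ι => Finset.univ) i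
      (Finset.mem_univ o), Fintype.piFinset_univ]
  rw [hpi, ← Finset.prod_univ_sum, Fintype.prod_eq_single i]
  · simp
  · intro j hj
    simp [Function.update_of_ne hj, (hk j).2]

end Fine

/-- A counterfactual model of `p`: Alice's and Charlie's responses `f`, `g` are independent with
distributions `α`, `γ`, and `w b (f, g)` is their joint distribution with Bob's outcome `b`. -/
structure IsCounterfactualModel (p : Corr) (α γ : Response → ℝ)
    (w : Fin 2 → Response × Response → ℝ) : Prop where
  alice : α ∈ stdSimplex ℝ Response
  charlie : γ ∈ stdSimplex ℝ Response
  nonneg : ∀ b s, 0 ≤ w b s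
  sum_bob : ∀ s, ∑ b, w b s = α s.1 * γ s.2
  eq_sum : ∀ a b c x z, p a b c x z = ∑ s ∈ responsesWith x a ×ˢ responsesWith z c, w b s

-- Local randomness is pushed into the sources: each party draws the answers to both inputs
-- independently before the input is known.
theorem MemS0.exists_counterfactualModel {p : Corr} (hp : MemS0 p) :
    ∃ α γ w, IsCounterfactualModel p α γ w := by
  obtain ⟨n₁, n₂, q₁, q₂, pA, pB, pC, hq₁, hq₂, hA, hA', hB, hB', hC, hC', h⟩ := hp
  have hkA (l) (x) : (fun a => pA a x l) ∈ stdSimplex ℝ (Fin 2) := ⟨fun _ => hA _ _ _, hA' x l⟩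
  have hkC (l) (z) : (fun c => pC c z l) ∈ stdSimplex ℝ (Fin 2) := ⟨fun _ => hC _ _ _, hC' z l⟩
  let A (l : Fin n₁) (f : Response) : ℝ := ∏ x, pA (f x) x l
  let C (l : Fin n₂) (g : Response) : ℝ := ∏ z, pC (g z) z l
  have hA_mem (l) : A l ∈ stdSimplex ℝ Response := prod_mem_stdSimplex (hkA l)
  have hC_mem (l) : C l ∈ stdSimplex ℝ Response := prod_mem_stdSimplex (hkC l)
  let W (l : Fin n₁ × Fin n₂) (b : Fin 2) (s : Response × Response) : ℝ :=
    q₁ l.1 * A l.1 s.1 * (q₂ l.2 * C l.2 s.2) * pB b l.1 l.2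
  refine ⟨∑ l, q₁ l • A l, ∑ l, q₂ l • C l, fun b s => ∑ l, W l b s, ?_, ?_, ?_, ?_, ?_⟩
  · exact (convex_stdSimplex ℝ _).sum_mem (fun l _ => hq₁.1 l) hq₁.2 fun l _ => hA_mem l
  · exact (convex_stdSimplex ℝ _).sum_mem (fun l _ => hq₂.1 l) hq₂.2 fun l _ => hC_mem l
  · exact fun b s => Finset.sum_nonneg fun l _ => mul_nonneg
      (mul_nonneg (mul_nonneg (hq₁.1 _) ((hA_mem _).1 _))
        (mul_nonneg (hq₂.1 _) ((hC_mem _).1 _))) (hB _ _ _)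
  · intro s
    rw [Finset.sum_comm]
    simp only [W, ← Finset.mul_sum, hB', mul_one, Finset.sum_apply, Pi.smul_apply, smul_eq_mul,
      Finset.sum_mul_sum, Fintype.sum_prod_type]
  · intro a b c x z
    have answer_A (l) : pA a x l = ∑ f ∈ responsesWith x a, A l f :=
      (sum_prod_filter_apply_eq (hkA l) x a).symm
    have answer_C (l) : pC c z l = ∑ g ∈ responsesWith z c, C l g :=
      (sum_prod_filter_apply_eq (hkC l) z c).symm
    symm
    rw [Finset.sum_comm, Fintype.sum_prod_type, h]
    refine Finset.sum_congr rfl fun l₁ _ => Finset.sum_congr rfl fun l₂ _ => ?_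
    symm
    calc q₁ l₁ * q₂ l₂ * pA a x l₁ * pB b l₁ l₂ * pC c z l₂
        = q₁ l₁ * pA a x l₁ * (q₂ l₂ * pC c z l₂) * pB b l₁ l₂ := by ring
      _ = ∑ s ∈ responsesWith x a ×ˢ responsesWith z c, W (l₁, l₂) b s := by
        rw [answer_A, answer_C, Finset.mul_sum, Finset.mul_sum, Finset.sum_mul_sum,
          ← Finset.sum_product', Finset.sum_mul]

lemma sum_le_sum_add_sum_of_subset_union {ι : Type*} [DecidableEq ι] {v : ι → ℝ}
    (hv : ∀ i, 0 ≤ v i) {r s t : Finset ι} (h : r ⊆ s ∪ t) :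
    ∑ i ∈ r, v i ≤ ∑ i ∈ s, v i + ∑ i ∈ t, v i :=
  calc ∑ i ∈ r, v i ≤ ∑ i ∈ s ∪ t, v i :=
        Finset.sum_le_sum_of_subset_of_nonneg h fun i _ _ => hv i
    _ ≤ ∑ i ∈ s ∪ t, v i + ∑ i ∈ s ∩ t, v i :=
        le_add_of_nonneg_right (Finset.sum_nonneg fun i _ => hv i)
    _ = ∑ i ∈ s, v i + ∑ i ∈ t, v i := Finset.sum_union_inter

namespace IsCounterfactualModel

variable {p : Corr} {α γ : Response → ℝ} {w : Fin 2 → Response × Response → ℝ}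

lemma sum_product_le (hm : IsCounterfactualModel p α γ w) (b : Fin 2) (F G : Finset Response) :
    ∑ s ∈ F ×ˢ G, w b s ≤ (∑ f ∈ F, α f) * ∑ g ∈ G, γ g := by
  rw [Finset.sum_mul_sum, ← Finset.sum_product']
  refine Finset.sum_le_sum fun s _ => ?_
  rw [← hm.sum_bob s]
  exact Finset.single_le_sum (fun b _ => hm.nonneg b s) (Finset.mem_univ b)

lemma sum_le_add_mul (hm : IsCounterfactualModel p α γ w) (b : Fin 2)
    {S T : Finset (Response × Response)} {F G : Finset Response} (h : S ⊆ T ∪ F ×ˢ G) :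
    ∑ s ∈ S, w b s ≤ ∑ s ∈ T, w b s + (∑ f ∈ F, α f) * ∑ g ∈ G, γ g :=
  (sum_le_sum_add_sum_of_subset_union (hm.nonneg b) h).trans
    (add_le_add_right (hm.sum_product_le b F G) _)

theorem le_add_mul (hm : IsCounterfactualModel p α γ w) (a a' b c x x' z : Fin 2) :
    p a b c x z ≤ p a' b c x' z +
      (∑ f with f x = a ∧ f x' ≠ a', α f) * ∑ g ∈ responsesWith z c, γ g := by
  simp only [hm.eq_sum]
  refine hm.sum_le_add_mul b fun s hs => ?_
  simp only [responsesWith, Finset.mem_union, Finset.mem_product, Finset.mem_filter_univ] at hs ⊢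
  tauto

theorem le_add_add_mul (hm : IsCounterfactualModel p α γ w) (a a' b c c' x x' z z' : Fin 2) :
    p a b c x z ≤ p a b c' x z' + p a' b c x' z +
      (∑ f with f x = a ∧ f x' ≠ a', α f) * ∑ g with g z = c ∧ g z' ≠ c', γ g := by
  simp only [hm.eq_sum]
  refine (hm.sum_le_add_mul b fun s hs => ?_).trans (add_le_add_left
    (sum_le_sum_add_sum_of_subset_union (hm.nonneg b) subset_rfl) _)
  simp only [responsesWith, Finset.mem_union, Finset.mem_product, Finset.mem_filter_univ] at hs ⊢
  tauto

theorem le_add_add_mul_of_ne (hm : IsCounterfactualModel p α γ w) {a' a'' : Fin 2}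
    (ha : a' ≠ a'') (a b c c' x x' z z' : Fin 2) :
    p a b c x z ≤ p a' b c x' z + p a'' b c' x' z' +
      (∑ f with f x = a ∧ f x' ≠ a', α f) * ∑ g with g z = c ∧ g z' ≠ c', γ g := by
  simp only [hm.eq_sum]
  refine (hm.sum_le_add_mul b fun s hs => ?_).trans (add_le_add_left
    (sum_le_sum_add_sum_of_subset_union (hm.nonneg b) subset_rfl) _)
  simp only [responsesWith, Finset.mem_union, Finset.mem_product, Finset.mem_filter_univ] at hs ⊢
  have : s.1 x' ≠ a' → s.1 x' = a'' := by lia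
  tauto

lemma sum_bob_eq_mul (hm : IsCounterfactualModel p α γ w) (a c x z : Fin 2) :
    ∑ b, p a b c x z = (∑ f ∈ responsesWith x a, α f) * ∑ g ∈ responsesWith z c, γ g := by
  simp only [hm.eq_sum]
  rw [Finset.sum_comm]
  simp only [hm.sum_bob, Finset.sum_product, Finset.sum_mul_sum]

lemma sum_alice (hm : IsCounterfactualModel p α γ w) (a x z : Fin 2) :
    ∑ f ∈ responsesWith x a, α f = ∑ c, ∑ b, p a b c x z := by
  simp only [hm.sum_bob_eq_mul, ← Finset.mul_sum, responsesWith, Finset.sum_fiberwise,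
    hm.charlie.2, mul_one]

lemma sum_charlie (hm : IsCounterfactualModel p α γ w) (c x z : Fin 2) :
    ∑ g ∈ responsesWith z c, γ g = ∑ a, ∑ b, p a b c x z := by
  simp only [hm.sum_bob_eq_mul, ← Finset.sum_mul, responsesWith, Finset.sum_fiberwise,
    hm.alice.2, one_mul]

end IsCounterfactualModel

lemma eq_half_sub_of_uniform {α : Response → ℝ}
    (h : ∀ i o, ∑ f ∈ responsesWith i o, α f = 1 / 2) :
    α ![0, 1] = 1 / 2 - α ![0, 0] ∧ α ![1, 0] = 1 / 2 - α ![0, 0] ∧ α ![1, 1] = α ![0, 0] := by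
  simp only [responsesWith, Finset.sum_filter, sum_response] at h
  have h₀₀ := h 0 0
  have h₁₀ := h 1 0
  have h₁₁ := h 1 1
  norm_num at h₀₀ h₁₀ h₁₁
  refine ⟨?_, ?_, ?_⟩ <;> linarith

-- `r` and `t` are the probabilities that Alice, respectively Charlie, answers `0` to both inputs.
theorem MemS0.exists_bounds {p : Corr} (hp : MemS0 p)
    (hAC : ∀ a c x z, ∑ b, p a b c x z = 1 / 4) :
    ∃ r t : ℝ, 0 ≤ r ∧ r ≤ 1 / 2 ∧
      p 0 0 0 1 0 - p 1 0 0 0 0 ≤ r * (1 / 2) ∧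
      p 0 0 1 1 1 - p 0 0 1 0 1 - p 1 0 0 0 0 ≤ (1 / 2 - r) * t ∧
      p 0 0 0 1 0 - p 0 0 0 1 1 - p 1 0 0 0 0 ≤ r * (1 / 2 - t) := by
  obtain ⟨α, γ, w, hm⟩ := hp.exists_counterfactualModel
  have hα (x a) : ∑ f ∈ responsesWith x a, α f = 1 / 2 := by
    rw [hm.sum_alice a x 0]; norm_num [hAC]
  have hγ (z c) : ∑ g ∈ responsesWith z c, γ g = 1 / 2 := by
    rw [hm.sum_charlie c 0 z]; norm_num [hAC]
  obtain ⟨-, hα₁₀, -⟩ := eq_half_sub_of_uniform hα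
  obtain ⟨hγ₀₁, -, hγ₁₁⟩ := eq_half_sub_of_uniform hγ
  have f₀₀ : ({f | f 1 = 0 ∧ f 0 ≠ 1} : Finset Response) = {![0, 0]} := by decide
  have f₁₀ : ({f | f 1 = 0 ∧ f 0 ≠ 0} : Finset Response) = {![1, 0]} := by decide
  have g₀₁ : ({g | g 0 = 0 ∧ g 1 ≠ 0} : Finset Response) = {![0, 1]} := by decide
  have g₁₁ : ({g | g 1 = 1 ∧ g 0 ≠ 0} : Finset Response) = {![1, 1]} := by decide
  have bound₁ := hm.le_add_mul 0 1 0 0 1 0 0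
  have bound₂ := hm.le_add_add_mul_of_ne zero_ne_one 0 0 1 0 1 0 1 0
  have bound₃ := hm.le_add_add_mul 0 1 0 0 0 1 0 0 1
  rw [f₀₀, Finset.sum_singleton, hγ] at bound₁
  rw [f₁₀, g₁₁, Finset.sum_singleton, Finset.sum_singleton, hα₁₀, hγ₁₁] at bound₂
  rw [f₀₀, g₀₁, Finset.sum_singleton, Finset.sum_singleton, hγ₀₁] at bound₃
  refine ⟨α ![0, 0], γ ![0, 0], hm.alice.1 _, ?_, ?_, ?_, ?_⟩ <;>
    linarith [hm.alice.1 ![1, 0]]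

theorem MemS0.exists_quadratic_bound {p : Corr} (hp : MemS0 p)
    (hAC : ∀ a c x z, ∑ b, p a b c x z = 1 / 4) :
    ∃ r : ℝ, p 0 0 0 1 0 - p 1 0 0 0 0 ≤ r / 2 ∧
      r * (p 0 0 1 1 1 - p 0 0 1 0 1 - p 1 0 0 0 0) +
        (1 / 2 - r) * (p 0 0 0 1 0 - p 0 0 0 1 1 - p 1 0 0 0 0) ≤ r * (1 / 2 - r) / 2 := by
  obtain ⟨r, t, hr₀, hr₁, h₁, h₂, h₃⟩ := hp.exists_bounds hAC
  refine ⟨r, by linarith, ?_⟩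
  linear_combination r * h₂ + (1 / 2 - r) * h₃

lemma sum_bob_pMix (V μ : ℝ) (a c x z : Fin 2) : ∑ b, pMix V μ a b c x z = 1 / 4 := by
  simp only [Fin.sum_univ_two, pMix, pPSbox, pLocal]
  fin_cases a <;> split_ifs <;> simp_all <;> ring

lemma quadratic_pos {V μ s : ℝ} (hV : 7 / 10 ≤ V) (hμ0 : 0 < μ) (hμ1 : μ ≤ 1)
    (hμ : 3 - 4 * V < μ * ((1 - V) * (2 - V))) (hs : -(μ * (1 - V)) ≤ s) :
    0 < s ^ 2 + (1 - μ) * s + μ * (3 * V - 2) := by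
  rcases le_total (2 * (μ * (1 - V))) (1 - μ) with hvertex | hvertex
  · have hmono : 0 ≤ (s + μ * (1 - V)) * (s - μ * (1 - V) + (1 - μ)) :=
      mul_nonneg (by linarith) (by linarith)
    have hend : 0 < μ * (4 * V - 3 + μ * ((1 - V) * (2 - V))) := mul_pos hμ0 (by linarith)
    linarith
  · have hdisc : (1 - μ) ^ 2 < 4 * (μ * (3 * V - 2)) := by
      have hμ_half : 1 - μ ≤ 1 / 2 := by nlinarith
      calc (1 - μ) ^ 2 ≤ 2 * (μ * (1 - V)) * (1 - μ) := by
            rw [sq]; exact mul_le_mul_of_nonneg_right hvertex (by linarith)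
        _ ≤ 2 * (μ * (1 - V)) * (1 / 2) :=
            mul_le_mul_of_nonneg_left hμ_half (by nlinarith)
        _ = μ * (1 - V) := by ring
        _ < μ * (4 * (3 * V - 2)) := mul_lt_mul_of_pos_left (by linarith) hμ0
        _ = 4 * (μ * (3 * V - 2)) := by ring
    linarith [sq_nonneg (2 * s + (1 - μ))]

theorem not_memS0_pMix {V μ : ℝ} (hV : 7 / 10 ≤ V) (hμ0 : 0 < μ) (hμ1 : μ ≤ 1)
    (hμ : 3 - 4 * V < μ * ((1 - V) * (2 - V))) : ¬ MemS0 (pMix V μ) := by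
  intro h
  obtain ⟨r, hlin, hquad⟩ := h.exists_quadratic_bound (sum_bob_pMix V μ)
  have gap₁ : pMix V μ 0 0 0 1 0 - pMix V μ 1 0 0 0 0 = (1 - μ * (1 - V)) / 8 := by
    simp [pMix, pPSbox, pPR, pLocal]; ring
  have gap₂ : pMix V μ 0 0 1 1 1 - pMix V μ 0 0 1 0 1 - pMix V μ 1 0 0 0 0 =
      (μ * (3 * V - 1) + 2 * (1 - μ)) / 16 := by
    simp [pMix, pPSbox, pPR, pLocal]; ring
  have gap₃ : pMix V μ 0 0 0 1 0 - pMix V μ 0 0 0 1 1 - pMix V μ 1 0 0 0 0 =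
      μ * (3 * V - 1) / 16 := by
    simp [pMix, pPSbox, pPR, pLocal]; ring
  rw [gap₁] at hlin
  rw [gap₂, gap₃] at hquad
  have hs : -(μ * (1 - V)) ≤ 4 * r - 1 := by linarith
  linarith [quadratic_pos hV hμ0 hμ1 hμ hs]

/-- The joint distribution of a uniform outcome `o` and a bit `b` with `P(b = 0) = β` and
`P(o = 0, b = 0) - P(o = 1, b = 0) = η`. -/
noncomputable def unbiasedBox (β η : ℝ) (o b : Fin 2) : ℝ :=
  if b = 0 then (β + (-1) ^ (o : ℕ) * η) / 2 else (1 - β - (-1) ^ (o : ℕ) * η) / 2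

lemma unbiasedBox_nonneg {β η : ℝ} (h : |η| ≤ min β (1 - β)) (o b : Fin 2) :
    0 ≤ unbiasedBox β η o b := by
  obtain ⟨⟨_, _⟩, _, _⟩ : (-β ≤ η ∧ η ≤ β) ∧ -(1 - β) ≤ η ∧ η ≤ 1 - β := by
    simpa only [le_min_iff, abs_le] using h
  fin_cases o <;> fin_cases b <;> simp [unbiasedBox] <;> linarith

lemma sum_unbiasedBox_right (β η : ℝ) (o : Fin 2) : ∑ b, unbiasedBox β η o b = 1 / 2 := by
  simp only [Fin.sum_univ_two, unbiasedBox, if_true, one_ne_zero, if_false]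
  ring

lemma sum_unbiasedBox_left (β η : ℝ) (b : Fin 2) :
    ∑ o, unbiasedBox β η o b = if b = 0 then β else 1 - β := by
  fin_cases b <;> simp [Fin.sum_univ_two, unbiasedBox] <;> ring

lemma isNSBox_unbiasedBox {X Y : Type} [Fintype X] [Fintype Y] {β : Y → ℝ} {η : X → Y → ℝ}
    (h : ∀ x y, |η x y| ≤ min (β y) (1 - β y)) :
    IsNSBox fun o b x y => unbiasedBox (β y) (η x y) o b := by
  refine ⟨fun o b x y => unbiasedBox_nonneg (h x y) o b, fun x y => ?_, fun o x y y' => ?_,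
    fun b x x' y => ?_⟩
  · simp only [sum_unbiasedBox_right]
    norm_num
  · simp only [sum_unbiasedBox_right]
  · simp only [sum_unbiasedBox_left]

lemma IsNSBox.swap {X Y : Type} [Fintype X] [Fintype Y] {nb : Fin 2 → Fin 2 → X → Y → ℝ}
    (h : IsNSBox nb) : IsNSBox fun o₂ o₁ y x => nb o₁ o₂ x y :=
  ⟨fun _ _ _ _ => h.1 _ _ _ _, fun y x => Finset.sum_comm.trans (h.2.1 x y),
    fun o₂ y x x' => h.2.2.2 o₂ x x' y, fun o₁ y y' x => h.2.2.1 o₁ x y y'⟩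

/-- The correlation `p` read from Charlie's end of the chain. -/
def Corr.reverse (p : Corr) : Corr := fun a b c x z => p c b a z x

lemma memS1BCo_of_reverse {p : Corr} (h : MemS1ABo p.reverse) : MemS1BCo p := by
  obtain ⟨n, q, nb, pC, hq, hnb, hC, hC', hp⟩ := h
  refine ⟨n, q, pC, fun b c l z => nb c b z l, hq, hC, hC', hnb.swap, fun a b c x z => ?_⟩
  calc p a b c x z = ∑ l, q l * nb c b z l * pC a x l := hp c b a z x
    _ = ∑ l, q l * pC a x l * nb c b z l := Finset.sum_congr rfl fun l _ => mul_right_comm ..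

lemma memS1ABo_of_response {p : Corr} {q : Response → ℝ} (hq : q ∈ stdSimplex ℝ Response)
    {nb : Fin 2 → Fin 2 → Fin 2 → Response → ℝ} (hnb : IsNSBox nb)
    (hp : ∀ a b c x z, p a b c x z = ∑ g ∈ responsesWith z c, q g * nb a b x g) :
    MemS1ABo p := by
  let e := (Fintype.equivFin Response).symm
  refine ⟨_, q ∘ e, fun a b x l => nb a b x (e l), fun c z l => if e l z = c then 1 else 0,
    ⟨fun l => hq.1 _, (e.sum_comp q).trans hq.2⟩,
    ⟨fun _ _ _ _ => hnb.1 _ _ _ _, fun _ _ => hnb.2.1 _ _, fun _ _ _ _ => hnb.2.2.1 _ _ _ _,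
      fun _ _ _ _ => hnb.2.2.2 _ _ _ _⟩,
    fun c z l => (ite_eq_mem_stdSimplex ℝ (e l z)).1 c,
    fun z l => (ite_eq_mem_stdSimplex ℝ (e l z)).2, fun a b c x z => ?_⟩
  rw [hp, responsesWith, Finset.sum_filter, ← e.sum_comp]
  simp only [Function.comp_apply, mul_ite, mul_one, mul_zero]

lemma memS1ABo_of_unbiasedBox {p : Corr} (β : Response → ℝ) (η : Fin 2 → Response → ℝ)
    (h : ∀ x g, |η x g| ≤ min (β g) (1 - β g))
    (hp : ∀ a b c x z,
      p a b c x z = ∑ g ∈ responsesWith z c, 1 / 4 * unbiasedBox (β g) (η x g) a b) :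
    MemS1ABo p :=
  memS1ABo_of_response ⟨fun _ => by norm_num, by norm_num⟩ (isNSBox_unbiasedBox h) hp

theorem memS1ABo_pMix {V μ : ℝ} (hV : 1 / 3 ≤ V) (hV1 : V ≤ 1) (h0 : 0 ≤ μ) (h1 : μ ≤ 1)
    (hμ : μ * V ≤ 1 / 2) : MemS1ABo (pMix V μ) := by
  have hlo : μ * (1 / 3) ≤ μ * V := mul_le_mul_of_nonneg_left hV h0
  have hhi : μ * V ≤ μ := mul_le_of_le_one_right h0 hV1
  -- Row sums of each table are prescribed by `z = 0` and column sums by `z = 1`; this leaves one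
  -- free parameter per table, chosen so that `|η| ≤ min β (1 - β)`.
  refine memS1ABo_of_unbiasedBox
    (fun g => !![(1 - μ + μ * V) / 2, (1 - μ * V) / 2;
      (1 - μ * V) / 2, (1 - μ + μ * V) / 2] (g 0) (g 1))
    (fun x g => ![
      !![(1 - μ + μ * V) / 2, (1 - μ) / 2; (1 - μ) / 2, -(1 - μ + μ * V) / 2],
      !![μ * V - 1 / 2, (1 - μ * V) / 2; (1 - 3 * (μ * V)) / 2, 1 / 2 - μ + μ * V]]
      x (g 0) (g 1)) ?_ ?_
  · intro x g
    simp only [le_min_iff, abs_le]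
    generalize g 0 = i, g 1 = j
    fin_cases x <;> fin_cases i <;> fin_cases j <;> refine ⟨⟨?_, ?_⟩, ?_, ?_⟩ <;> simp <;>
      linarith
  · intro a b c x z
    rw [responsesWith, Finset.sum_filter, sum_response]
    fin_cases a <;> fin_cases b <;> fin_cases c <;> fin_cases x <;> fin_cases z <;>
      simp [unbiasedBox, pMix, pPSbox, pPR, pLocal] <;> ring

theorem memS1BCo_pMix {V μ : ℝ} (hV : 1 / 3 ≤ V) (hV1 : V ≤ 1) (h0 : 0 ≤ μ) (h1 : μ ≤ 1)
    (hμ : μ * V ≤ 1 / 2) : MemS1BCo (pMix V μ) := by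
  have hlo : μ * (1 / 3) ≤ μ * V := mul_le_mul_of_nonneg_left hV h0
  have hhi : μ * V ≤ μ := mul_le_of_le_one_right h0 hV1
  -- Same linear problem, with Alice's inputs prescribing the row and column sums.
  refine memS1BCo_of_reverse <| memS1ABo_of_unbiasedBox
    (fun f => !![(2 - μ - μ * V) / 2, (1 - μ + μ * V) / 2;
      (1 - μ + μ * V) / 2, (μ - μ * V) / 2] (f 0) (f 1))
    (fun z f => ![
      !![(3 * (μ * V) - μ) / 2, (1 - 2 * (μ * V)) / 2;
        (2 * μ - 1 - 2 * (μ * V)) / 2, (μ * V - μ) / 2],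
      !![0, (1 - μ + μ * V) / 2; -(1 - μ + μ * V) / 2, 0]] z (f 0) (f 1)) ?_ ?_
  · intro z f
    simp only [le_min_iff, abs_le]
    generalize f 0 = i, f 1 = j
    fin_cases z <;> fin_cases i <;> fin_cases j <;> refine ⟨⟨?_, ?_⟩, ?_, ?_⟩ <;> simp <;>
      linarith
  · intro c b a z x
    rw [responsesWith, Finset.sum_filter, sum_response]
    fin_cases a <;> fin_cases b <;> fin_cases c <;> fin_cases x <;> fin_cases z <;>
      simp [unbiasedBox, Corr.reverse, pMix, pPSbox, pPR, pLocal] <;> ring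

theorem mix_quantum_MNN_general {V μ : ℝ} (hV : 7 / 10 ≤ V) (hV1 : V ≤ 1) (hμ0 : 0 < μ)
    (hμ : 3 - 4 * V < μ * ((1 - V) * (2 - V))) (hμV : μ * V ≤ 1 / 2) :
    ¬ MemS0 (pMix V μ) ∧ MemS1ABo (pMix V μ) ∧ MemS1BCo (pMix V μ) := by
  have hV3 : 1 / 3 ≤ V := by linarith
  have hμ1 : μ ≤ 1 := by nlinarith
  exact ⟨not_memS0_pMix hV hμ0 hμ1 hμ, memS1ABo_pMix hV3 hV1 hμ0.le hμ1 hμV,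
    memS1BCo_pMix hV3 hV1 hμ0.le hμ1 hμV⟩

lemma inv_sqrt_two_mem_Ioo : (√2)⁻¹ ∈ Set.Ioo (0.7071 : ℝ) 0.70711 := by
  have hsq : (√2)⁻¹ ^ 2 = (1 / 2 : ℝ) := by norm_num [inv_pow]
  have hpos : 0 < (√2)⁻¹ := by positivity
  constructor <;> nlinarith

/-- for `μ ∈ (0.455, 0.705)`, the mixture
`p_μ = μ·p_PS(1/√2, 1/4) + (1-μ)·p_local` is minimally network nonclassical. -/
theorem mix_quantum_MNN (μ : ℝ) (h1 : (0.455 : ℝ) < μ) (h2 : μ < (0.705 : ℝ)) :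
    ¬ MemS0 (pMix (Real.sqrt 2)⁻¹ μ) ∧
    MemS1ABo (pMix (Real.sqrt 2)⁻¹ μ) ∧ MemS1BCo (pMix (Real.sqrt 2)⁻¹ μ) := by
  obtain ⟨hlo, hhi⟩ := inv_sqrt_two_mem_Ioo
  have hgap : 0.378 < (1 - (√2)⁻¹) * (2 - (√2)⁻¹) := by nlinarith
  exact mix_quantum_MNN_general (by linarith) (by linarith) (by linarith) (by nlinarith)
    (by nlinarith)
end

section
/- For every theta in the open interval (0, pi/2) with theta ≠ pi/4, the quantum correlation p_theta is minimally network nonclassical in the minimal 3-chain scenario: p_theta does not belong to S0, while p_theta belongs to both S1^[AB^O BC^L] and S1^[AB^L BC^O]. -/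
open Finset

open Matrix

noncomputable def sigx : Matrix (Fin 2) (Fin 2) ℂ := !![0, 1; 1, 0]
noncomputable def sigz : Matrix (Fin 2) (Fin 2) ℂ := !![1, 0; 0, -1]

/-- `|φ⁺⟩ = (|00⟩ + |11⟩)/√2` as a vector on `Fin 2 × Fin 2`. -/
noncomputable def phiPlusVec : Fin 2 × Fin 2 → ℂ := fun q =>
  if q.1 = q.2 then ((Real.sqrt 2 : ℂ))⁻¹ else 0

/-- 16-dimensional index set, tensor factors ordered (A, B1, B2, C). -/
abbrev Q4 : Type := Fin 2 × Fin 2 × Fin 2 × Fin 2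

/-- `|ψ⟩ = |φ⁺⟩_{A B1} ⊗ |φ⁺⟩_{B2 C}`. -/
noncomputable def psiES : Q4 → ℂ := fun i =>
  phiPlusVec (i.1, i.2.1) * phiPlusVec (i.2.2.1, i.2.2.2)

/-- Alice's / Charlie's observables: `A_0 = C_0 = σ_x`, `A_1 = C_1 = σ_z`. -/
noncomputable def obsXZ : Fin 2 → Matrix (Fin 2) (Fin 2) ℂ := fun x =>
  if x = 0 then sigx else sigz

/-- Projectors `(I + (-1)^a (obsXZ x))/2`. -/
noncomputable def projXZ (a x : Fin 2) : Matrix (Fin 2) (Fin 2) ℂ :=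
  (2⁻¹ : ℂ) • (1 + ((-1 : ℂ) ^ (a : ℕ)) • obsXZ x)

/-- `|ψ_θ⟩ = sin θ |01⟩ + cos θ |10⟩`. -/
noncomputable def psiTheta (θ : ℝ) : Fin 2 × Fin 2 → ℂ := fun q =>
  if q = ((0 : Fin 2), (1 : Fin 2)) then (Real.sin θ : ℂ)
  else if q = ((1 : Fin 2), (0 : Fin 2)) then (Real.cos θ : ℂ) else 0

/-- Bob's measurement: `B_0(θ) = |ψ_θ⟩⟨ψ_θ|`, `B_1(θ) = I - B_0(θ)`. -/
noncomputable def Btheta (θ : ℝ) : Fin 2 → Matrix (Fin 2 × Fin 2) (Fin 2 × Fin 2) ℂ := fun b =>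
  if b = 0 then vecMulVec (psiTheta θ) (star (psiTheta θ))
  else 1 - vecMulVec (psiTheta θ) (star (psiTheta θ))

/-- Entrywise Kronecker product `P^A(a|x) ⊗ B_b(θ) ⊗ P^C(c|z)`. -/
noncomputable def opTheta (θ : ℝ) (a b c x z : Fin 2) : Matrix Q4 Q4 ℂ :=
  Matrix.of fun i j =>
    projXZ a x i.1 j.1 * Btheta θ b (i.2.1, i.2.2.1) (j.2.1, j.2.2.1) *
      projXZ c z i.2.2.2 j.2.2.2

/-- `p_θ(a,b,c|x,z) = ⟨ψ, (P^A(a|x) ⊗ B_b(θ) ⊗ P^C(c|z)) ψ⟩`. -/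
noncomputable def pTheta (θ : ℝ) : Corr := fun a b c x z =>
  (dotProduct (star psiES) (mulVec (opTheta θ a b c x z) psiES)).re

/-!
In a classical model both ends may be taken to answer all inputs jointly. On inputs `x = z = 1`,
Bob's outcome `0` forces opposite outcomes of Alice and Charlie, so the event `b = 0` splits into
the blocks `(a, c) = (0, 1)` and `(1, 0)`. The `b = 0` correlator on inputs `x = z = 0` is bounded
blockwise: on `(0, 1)` by the weight of `b = 0`, and on `(1, 0)` by the weight of `b = 1`, because
each party's answer to input `0` is unbiased given `b = 0` and the other party's answer to input
`1`. For `p_θ` this reads `|sin 2θ| ≤ 1 - cos 2θ`, and exchanging Alice and Charlie gives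
`|sin 2θ| ≤ 1 + cos 2θ`. Together they force `|sin 2θ| + |cos 2θ| ≤ 1`, hence `sin 4θ = 0`.

Conversely, if only one source must be classical, it can be taken to be a uniformly random
deterministic strategy of the end party it serves, and an explicit no-signalling box plays the
role of the other source.
-/

open scoped Kronecker

section BilinearBounds

variable {ι κ R : Type*} [Fintype ι] [Fintype κ]

lemma dotProduct_mulVec_eq_sum [CommSemiring R] (u : ι → R) (B : Matrix ι κ R) (w : κ → R) :
    u ⬝ᵥ B *ᵥ w = ∑ i, ∑ j, u i * w j * B i j := by
  simp only [dotProduct, mulVec, mul_sum]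
  exact sum_congr rfl fun _ _ => sum_congr rfl fun _ _ => by ring

lemma dotProduct_of_one_mulVec [CommSemiring R] (u : ι → R) (w : κ → R) :
    u ⬝ᵥ (Matrix.of fun _ _ => 1) *ᵥ w = (∑ i, u i) * ∑ j, w j := by
  simp only [dotProduct_mulVec_eq_sum, of_apply, mul_one, sum_mul_sum]

variable [CommRing R] [LinearOrder R] [IsStrictOrderedRing R]

lemma abs_mul_add_mul_le_mul_add_mul {u s w t : R} (hs : |s| ≤ u) (ht : |t| ≤ w) :
    |s * w + u * t| ≤ u * w + s * t := by
  obtain ⟨hs₁, hs₂⟩ := abs_le.mp hs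
  obtain ⟨ht₁, ht₂⟩ := abs_le.mp ht
  exact abs_le.mpr ⟨by nlinarith, by nlinarith⟩

lemma mul_le_abs_mul_add_mul {u s w t : R} (hs : |s| ≤ u) (ht : |t| ≤ w) :
    s * t ≤ |s * w + u * t| := by
  obtain ⟨hs₁, hs₂⟩ := abs_le.mp hs
  obtain ⟨ht₁, ht₂⟩ := abs_le.mp ht
  rcases le_total 0 s with h | h <;> rcases le_total 0 t with h' | h'
  · exact le_abs.mpr (.inl (by nlinarith))
  · exact (mul_nonpos_of_nonneg_of_nonpos h h').trans (abs_nonneg _)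
  · exact (mul_nonpos_of_nonpos_of_nonneg h h').trans (abs_nonneg _)
  · exact le_abs.mpr (.inr (by nlinarith))

lemma abs_mul_sub_le_of_add_eq_one {v r₀ r₁ : R} (hv : 0 ≤ v) (h₀ : 0 ≤ r₀) (h₁ : 0 ≤ r₁)
    (hr : r₀ + r₁ = 1) : |v * (r₀ - r₁)| ≤ v := by
  rw [abs_mul, abs_of_nonneg hv]
  exact mul_le_of_le_one_right hv (abs_le.mpr ⟨by linarith, by linarith⟩)

variable {u s : ι → R} {w t : κ → R} {B : Matrix ι κ R}

lemma abs_sum_le_of_forall_abs_le (hs : ∀ i, |s i| ≤ u i) : |∑ i, s i| ≤ ∑ i, u i :=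
  (abs_sum_le_sum_abs _ _).trans (sum_le_sum fun i _ => hs i)

lemma abs_dotProduct_mulVec_le (hB : ∀ i j, 0 ≤ B i j) (hs : ∀ i, |s i| ≤ u i)
    (ht : ∀ j, |t j| ≤ w j) : |s ⬝ᵥ B *ᵥ t| ≤ u ⬝ᵥ B *ᵥ w := by
  simp only [dotProduct_mulVec_eq_sum]
  refine (abs_sum_le_sum_abs _ _).trans (sum_le_sum fun i _ =>
    (abs_sum_le_sum_abs _ _).trans (sum_le_sum fun j _ => ?_))
  rw [abs_mul, abs_mul, abs_of_nonneg (hB i j)]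
  exact mul_le_mul_of_nonneg_right
    (mul_le_mul (hs i) (ht j) (abs_nonneg _) ((abs_nonneg _).trans (hs i))) (hB i j)

lemma abs_dotProduct_mulVec_add_le (hB : ∀ i j, 0 ≤ B i j) (hs : ∀ i, |s i| ≤ u i)
    (ht : ∀ j, |t j| ≤ w j) :
    |s ⬝ᵥ B *ᵥ w + u ⬝ᵥ B *ᵥ t| ≤ u ⬝ᵥ B *ᵥ w + s ⬝ᵥ B *ᵥ t := by
  simp only [dotProduct_mulVec_eq_sum, ← sum_add_distrib, ← add_mul]
  refine (abs_sum_le_sum_abs _ _).trans (sum_le_sum fun i _ =>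
    (abs_sum_le_sum_abs _ _).trans (sum_le_sum fun j _ => ?_))
  rw [abs_mul, abs_of_nonneg (hB i j)]
  exact mul_le_mul_of_nonneg_right (abs_mul_add_mul_le_mul_add_mul (hs i) (ht j)) (hB i j)

/-- The bound comes from positivity of the complementary effect `1 - B`, for which the one-sided
terms factorize because they vanish for `B`. -/
lemma dotProduct_mulVec_le_of_unbiased (hB : ∀ i j, B i j ≤ 1) (hs : ∀ i, |s i| ≤ u i)
    (ht : ∀ j, |t j| ≤ w j) (hsw : s ⬝ᵥ B *ᵥ w = 0) (hut : u ⬝ᵥ B *ᵥ t = 0) :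
    s ⬝ᵥ B *ᵥ t ≤ (∑ i, u i) * (∑ j, w j) - u ⬝ᵥ B *ᵥ w := by
  have hcompl := abs_dotProduct_mulVec_add_le (B := Matrix.of (fun _ _ => 1) - B)
    (fun i j => sub_nonneg.mpr (hB i j)) hs ht
  simp only [sub_mulVec, dotProduct_sub, dotProduct_of_one_mulVec, hsw, hut, sub_zero] at hcompl
  have hprod := mul_le_abs_mul_add_mul (abs_sum_le_of_forall_abs_le hs)
    (abs_sum_le_of_forall_abs_le ht)
  linarith

lemma abs_dotProduct_mulVec_le_of_unbiased (hB : ∀ i j, B i j ≤ 1) (hs : ∀ i, |s i| ≤ u i)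
    (ht : ∀ j, |t j| ≤ w j) (hsw : s ⬝ᵥ B *ᵥ w = 0) (hut : u ⬝ᵥ B *ᵥ t = 0) :
    |s ⬝ᵥ B *ᵥ t| ≤ (∑ i, u i) * (∑ j, w j) - u ⬝ᵥ B *ᵥ w := by
  have hneg := dotProduct_mulVec_le_of_unbiased (s := -s) hB (by simpa using hs) ht
    (by rw [neg_dotProduct, hsw, neg_zero]) hut
  rw [neg_dotProduct] at hneg
  exact abs_le'.mpr ⟨dotProduct_mulVec_le_of_unbiased hB hs ht hsw hut, hneg⟩

lemma abs_dotProduct_mulVec_le_of_anticorrelated {u s : Fin 2 → ι → R} {w t : Fin 2 → κ → R}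
    (hB₀ : ∀ i j, 0 ≤ B i j) (hB₁ : ∀ i j, B i j ≤ 1) (hs : ∀ a i, |s a i| ≤ u a i)
    (ht : ∀ c j, |t c j| ≤ w c j) (h00 : u 0 ⬝ᵥ B *ᵥ w 0 = 0) (h11 : u 1 ⬝ᵥ B *ᵥ w 1 = 0)
    (hsw : (s 0 + s 1) ⬝ᵥ B *ᵥ w 0 = 0) (hut : u 1 ⬝ᵥ B *ᵥ (t 0 + t 1) = 0) :
    |(s 0 + s 1) ⬝ᵥ B *ᵥ (t 0 + t 1)| ≤
      u 0 ⬝ᵥ B *ᵥ w 1 + ((∑ i, u 1 i) * (∑ j, w 0 j) - u 1 ⬝ᵥ B *ᵥ w 0) := by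
  have hu : ∀ a i, |u a i| ≤ u a i := fun a i => (abs_of_nonneg ((abs_nonneg _).trans (hs a i))).le
  have hw : ∀ c j, |w c j| ≤ w c j := fun c j => (abs_of_nonneg ((abs_nonneg _).trans (ht c j))).le
  have vanish {a c : Fin 2} {s' : ι → R} {t' : κ → R} (h : u a ⬝ᵥ B *ᵥ w c = 0)
      (hs' : ∀ i, |s' i| ≤ u a i) (ht' : ∀ j, |t' j| ≤ w c j) : s' ⬝ᵥ B *ᵥ t' = 0 :=
    abs_nonpos_iff.mp ((abs_dotProduct_mulVec_le hB₀ hs' ht').trans_eq h)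
  rw [add_dotProduct, vanish h00 (hs 0) (hw 0), zero_add] at hsw
  rw [mulVec_add, dotProduct_add, vanish h11 (hu 1) (ht 1), add_zero] at hut
  calc |(s 0 + s 1) ⬝ᵥ B *ᵥ (t 0 + t 1)|
      = |s 0 ⬝ᵥ B *ᵥ t 1 + s 1 ⬝ᵥ B *ᵥ t 0| := by
        simp only [mulVec_add, add_dotProduct, dotProduct_add, vanish h00 (hs 0) (ht 0),
          vanish h11 (hs 1) (ht 1), zero_add, add_comm]
    _ ≤ |s 0 ⬝ᵥ B *ᵥ t 1| + |s 1 ⬝ᵥ B *ᵥ t 0| := abs_add_le _ _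
    _ ≤ _ := add_le_add (abs_dotProduct_mulVec_le hB₀ (hs 0) (ht 1))
        (abs_dotProduct_mulVec_le_of_unbiased hB₁ (hs 1) (ht 0) hsw hut)

end BilinearBounds

/-- The correlation with the roles of Alice and Charlie exchanged. -/
def Corr.swap (p : Corr) : Corr := fun a b c x z => p c b a z x

lemma MemS0.swap {p : Corr} (h : MemS0 p) : MemS0 p.swap := by
  obtain ⟨n1, n2, q1, q2, pA, pB, pC, hq1, hq2, hA, hA1, hB, hB1, hC, hC1, hp⟩ := h
  refine ⟨n2, n1, q2, q1, pC, fun b j i => pB b i j, pA, hq2, hq1, hC, hC1,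
    fun b j i => hB b i j, fun j i => hB1 i j, hA, hA1, fun a b c x z => ?_⟩
  rw [Corr.swap, hp, sum_comm]
  exact sum_congr rfl fun _ _ => sum_congr rfl fun _ _ => by ring

lemma MemS1ABo.swap {p : Corr} (h : MemS1ABo p) : MemS1BCo p.swap := by
  obtain ⟨n, q, nb, pC, hq, ⟨hnb, hnb1, hA, hB⟩, hC, hC1, hp⟩ := h
  refine ⟨n, q, pC, fun b c l z => nb c b z l, hq, hC, hC1,
    ⟨fun b c l z => hnb c b z l, fun l z => sum_comm.trans (hnb1 z l),
      fun b l z z' => hB b z z' l, fun c l l' z => hA c z l l'⟩, fun a b c x z => ?_⟩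
  rw [Corr.swap, hp]
  exact sum_congr rfl fun _ _ => by ring

lemma MemS0.exists_dotProduct_mulVec {p : Corr} (h : MemS0 p) :
    ∃ (m n : ℕ) (q₁ : Fin m → ℝ) (q₂ : Fin n → ℝ) (rA : Fin 2 → Fin 2 → Fin m → ℝ)
      (B : Fin 2 → Matrix (Fin m) (Fin n) ℝ) (rC : Fin 2 → Fin 2 → Fin n → ℝ),
      IsWeights q₁ ∧ IsWeights q₂ ∧
      (∀ a x i, 0 ≤ rA a x i) ∧ (∀ x, rA 0 x + rA 1 x = 1) ∧
      (∀ b i j, 0 ≤ B b i j) ∧ B 0 + B 1 = Matrix.of (fun _ _ => 1) ∧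
      (∀ c z j, 0 ≤ rC c z j) ∧ (∀ z, rC 0 z + rC 1 z = 1) ∧
      ∀ a b c x z, p a b c x z = (q₁ * rA a x) ⬝ᵥ B b *ᵥ (q₂ * rC c z) := by
  obtain ⟨m, n, q₁, q₂, pA, pB, pC, hq₁, hq₂, hA, hA1, hB, hB1, hC, hC1, hp⟩ := h
  simp only [Fin.sum_univ_two] at hA1 hB1 hC1
  refine ⟨m, n, q₁, q₂, pA, fun b => Matrix.of (pB b), pC, hq₁, hq₂, hA, fun x => funext (hA1 x),
    hB, Matrix.ext hB1, hC, fun z => funext (hC1 z), fun a b c x z => ?_⟩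
  rw [hp, dotProduct_mulVec_eq_sum]
  refine sum_congr rfl fun i _ => sum_congr rfl fun j _ => ?_
  simp only [of_apply, Pi.mul_apply]
  ring

lemma MemS0.abs_correlator_le {p : Corr} (h : MemS0 p) {x x' z z' : Fin 2}
    (h00 : p 0 0 0 x z = 0) (h11 : p 1 0 1 x z = 0)
    (hA : p 0 0 0 x' z = p 1 0 0 x' z) (hC : p 1 0 0 x z' = p 1 0 1 x z') :
    |p 0 0 0 x' z' - p 0 0 1 x' z' - p 1 0 0 x' z' + p 1 0 1 x' z'| ≤
      p 0 0 1 x z + ((∑ b : Fin 2, ∑ c : Fin 2, p 1 b c x z) *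
        (∑ a : Fin 2, ∑ b : Fin 2, p a b 0 x z) - p 1 0 0 x z) := by
  obtain ⟨m, n, q₁, q₂, rA, B, rC, ⟨hq₁, hq₁1⟩, ⟨hq₂, hq₂1⟩, hrA, hrA1, hB, hB1, hrC, hrC1, hp⟩ :=
    h.exists_dotProduct_mulVec
  have hmargA : ∑ b : Fin 2, ∑ c : Fin 2, p 1 b c x z = ∑ i, (q₁ * rA 1 x) i := by
    simp only [Fin.sum_univ_two, hp, ← dotProduct_add, ← mulVec_add, ← add_mulVec, ← mul_add,
      hrC1, hB1, dotProduct_of_one_mulVec, mul_one, hq₂1]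
  have hmargC : ∑ a : Fin 2, ∑ b : Fin 2, p a b 0 x z = ∑ j, (q₂ * rC 0 z) j := by
    simp only [Fin.sum_univ_two, hp, ← dotProduct_add, ← add_mulVec, hB1]
    rw [← add_dotProduct, ← mul_add, hrA1, mul_one, dotProduct_of_one_mulVec, hq₁1, one_mul]
  let s (a : Fin 2) : Fin m → ℝ := q₁ * rA a x * (rA 0 x' - rA 1 x')
  let t (c : Fin 2) : Fin n → ℝ := q₂ * rC c z * (rC 0 z' - rC 1 z')
  have hs : ∀ a i, |s a i| ≤ (q₁ * rA a x) i := fun a i =>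
    abs_mul_sub_le_of_add_eq_one (mul_nonneg (hq₁ i) (hrA a x i)) (hrA 0 x' i) (hrA 1 x' i)
      (congrFun (hrA1 x') i)
  have ht : ∀ c j, |t c j| ≤ (q₂ * rC c z) j := fun c j =>
    abs_mul_sub_le_of_add_eq_one (mul_nonneg (hq₂ j) (hrC c z j)) (hrC 0 z' j) (hrC 1 z' j)
      (congrFun (hrC1 z') j)
  have hs_add : s 0 + s 1 = q₁ * rA 0 x' - q₁ * rA 1 x' := by
    simp only [s, ← add_mul, ← mul_add, hrA1, mul_one, ← mul_sub]
  have ht_add : t 0 + t 1 = q₂ * rC 0 z' - q₂ * rC 1 z' := by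
    simp only [t, ← add_mul, ← mul_add, hrC1, mul_one, ← mul_sub]
  have hB₁ : ∀ i j, B 0 i j ≤ 1 := fun i j =>
    (le_add_of_nonneg_right (hB 1 i j)).trans_eq (congrFun₂ hB1 i j)
  have key := abs_dotProduct_mulVec_le_of_anticorrelated (hB 0) hB₁ hs ht
    (by rw [← hp, h00]) (by rw [← hp, h11])
    (by rw [hs_add, sub_dotProduct, ← hp, ← hp, hA, sub_self])
    (by rw [ht_add, mulVec_sub, dotProduct_sub, ← hp, ← hp, hC, sub_self])
  rw [hs_add, ht_add, ← hmargA, ← hmargC] at key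
  simp only [mulVec_sub, sub_dotProduct, dotProduct_sub, ← hp] at key
  exact (congrArg abs (by ring)).trans_le key

/-- The sign `(-1)^a` by which a binary outcome `a` enters correlators. -/
def outcomeSign (a : Fin 2) : ℝ := (-1) ^ (a : ℕ)

@[simp] lemma outcomeSign_zero : outcomeSign 0 = 1 := pow_zero _

@[simp] lemma outcomeSign_one : outcomeSign 1 = -1 := pow_one _

lemma abs_outcomeSign (a : Fin 2) : |outcomeSign a| = 1 := abs_neg_one_pow _

lemma inv_sqrt_two_mul_self : ((Real.sqrt 2 : ℝ) : ℂ)⁻¹ * ((Real.sqrt 2 : ℝ) : ℂ)⁻¹ = 2⁻¹ := by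
  rw [← mul_inv, ← Complex.ofReal_mul, Real.mul_self_sqrt zero_le_two, Complex.ofReal_ofNat]

lemma psiES_dotProduct_opTheta_mulVec (θ : ℝ) (a b c x z : Fin 2) :
    star psiES ⬝ᵥ opTheta θ a b c x z *ᵥ psiES =
      ((projXZ a x ⊗ₖ projXZ c z)ᵀ * Btheta θ b).trace / 4 := by
  simp [dotProduct, mulVec, Fintype.sum_prod_type, opTheta, psiES, phiPlusVec, trace, mul_apply,
    inv_sqrt_two_mul_self, Complex.conj_ofNat]
  ring

lemma pTheta_eq_trace (θ : ℝ) (a b c x z : Fin 2) :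
    pTheta θ a b c x z = ((projXZ a x ⊗ₖ projXZ c z)ᵀ * Btheta θ b).trace.re / 4 := by
  rw [pTheta, psiES_dotProduct_opTheta_mulVec, Complex.div_ofNat_re]

lemma projXZ_zero (a : Fin 2) :
    projXZ a 0 =
      !![1 / 2, outcomeSign a / 2; outcomeSign a / 2, 1 / 2].map Complex.ofReal := by
  ext i j
  fin_cases i <;> fin_cases j <;> simp [projXZ, obsXZ, sigx, outcomeSign] <;> ring

lemma projXZ_one (a : Fin 2) :
    projXZ a 1 =
      !![(1 + outcomeSign a) / 2, 0; 0, (1 - outcomeSign a) / 2].map Complex.ofReal := by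
  ext i j
  fin_cases i <;> fin_cases j <;> simp [projXZ, obsXZ, sigz, outcomeSign] <;> ring

lemma trace_projXZ (a x : Fin 2) : (projXZ a x).trace = 1 := by
  fin_cases x <;> simp [projXZ_zero, projXZ_one, trace] <;> ring

lemma pTheta_one (θ : ℝ) (a c x z : Fin 2) :
    pTheta θ a 1 c x z = 1 / 4 - pTheta θ a 0 c x z := by
  simp only [pTheta_eq_trace, Btheta, if_pos, one_ne_zero, if_false, mul_sub, mul_one, trace_sub,
    trace_transpose, trace_kronecker, trace_projXZ, Complex.sub_re, Complex.one_re, sub_div]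

lemma trace_transpose_kronecker_mul_Btheta_zero (θ : ℝ) (P Q : Matrix (Fin 2) (Fin 2) ℝ) :
    ((P.map Complex.ofReal ⊗ₖ Q.map Complex.ofReal)ᵀ * Btheta θ 0).trace =
      ((P 0 0 * Q 1 1 * Real.sin θ ^ 2 + P 1 1 * Q 0 0 * Real.cos θ ^ 2 +
        (P 0 1 * Q 1 0 + P 1 0 * Q 0 1) * (Real.sin θ * Real.cos θ) : ℝ) : ℂ) := by
  simp [Btheta, trace, mul_apply, vecMulVec_apply, Fintype.sum_prod_type, psiTheta,
    -Complex.ofReal_sin, -Complex.ofReal_cos]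
  ring

lemma pTheta_zero (θ : ℝ) (a c x z : Fin 2) :
    pTheta θ a 0 c x z = (1 - outcomeSign a * ![0, Real.cos (2 * θ)] x
      + outcomeSign c * ![0, Real.cos (2 * θ)] z
      + outcomeSign a * outcomeSign c * !![Real.sin (2 * θ), 0; 0, -1] x z) / 16 := by
  have hsc := Real.sin_sq_add_cos_sq θ
  fin_cases x <;> fin_cases z <;>
    simp only [Fin.zero_eta, Fin.mk_one, pTheta_eq_trace, projXZ_zero, projXZ_one,
      trace_transpose_kronecker_mul_Btheta_zero, Complex.ofReal_re, of_apply, Matrix.cons_val,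
      Real.sin_two_mul, Real.cos_two_mul']
  · linear_combination hsc / 16
  · linear_combination hsc / 16
  · linear_combination hsc / 16
  · linear_combination (1 - outcomeSign a * outcomeSign c) * hsc / 16

lemma pTheta_swap (θ : ℝ) : (pTheta θ).swap = pTheta (Real.pi / 2 - θ) := by
  have hθ : 2 * (Real.pi / 2 - θ) = Real.pi - 2 * θ := by ring
  have hzero : ∀ a c x z, pTheta θ c 0 a z x = pTheta (Real.pi / 2 - θ) a 0 c x z := by
    intro a c x z
    simp only [pTheta_zero, hθ, Real.sin_pi_sub, Real.cos_pi_sub]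
    fin_cases x <;> fin_cases z <;>
      simp only [Fin.zero_eta, Fin.mk_one, of_apply, Matrix.cons_val] <;> ring
  funext a b c x z
  fin_cases b
  · exact hzero a c x z
  · simp [Corr.swap, pTheta_one, hzero]

lemma abs_sin_two_mul_le_of_memS0_pTheta {θ : ℝ} (h : MemS0 (pTheta θ)) :
    |Real.sin (2 * θ)| ≤ 1 - Real.cos (2 * θ) := by
  have hle := h.abs_correlator_le (x := 1) (x' := 0) (z := 1) (z' := 0)
    (by simp [pTheta_zero]) (by simp [pTheta_zero]) (by simp [pTheta_zero]) (by simp [pTheta_zero])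
  simp only [Fin.sum_univ_two, pTheta_one, pTheta_zero, outcomeSign_zero, outcomeSign_one, of_apply,
    Matrix.cons_val] at hle
  obtain ⟨hneg, hpos⟩ := abs_le.mp hle
  exact abs_le.mpr ⟨by linarith, by linarith⟩

lemma sin_four_mul_eq_zero_of_memS0_pTheta {θ : ℝ} (h : MemS0 (pTheta θ)) :
    Real.sin (4 * θ) = 0 := by
  have hle := abs_sin_two_mul_le_of_memS0_pTheta h
  have hge := abs_sin_two_mul_le_of_memS0_pTheta (pTheta_swap θ ▸ h.swap)
  rw [show 2 * (Real.pi / 2 - θ) = Real.pi - 2 * θ by ring, Real.sin_pi_sub, Real.cos_pi_sub] at hge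
  have habs : |Real.sin (2 * θ)| + |Real.cos (2 * θ)| ≤ 1 := by
    rcases abs_cases (Real.cos (2 * θ)) with ⟨hc, -⟩ | ⟨hc, -⟩ <;> linarith
  have hprod : |Real.sin (2 * θ)| * |Real.cos (2 * θ)| = 0 := by
    have hsq : |Real.sin (2 * θ)| ^ 2 + |Real.cos (2 * θ)| ^ 2 = 1 := by
      simp only [sq_abs, Real.sin_sq_add_cos_sq]
    nlinarith [abs_nonneg (Real.sin (2 * θ)), abs_nonneg (Real.cos (2 * θ))]
  rw [← abs_mul, abs_eq_zero] at hprod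
  rw [show 4 * θ = 2 * (2 * θ) by ring, Real.sin_two_mul, mul_assoc, hprod, mul_zero]

lemma memS1ABo_of_fintype {p : Corr} {ι : Type} [Fintype ι] {q : ι → ℝ}
    {nb : Fin 2 → Fin 2 → Fin 2 → ι → ℝ} {pC : Fin 2 → Fin 2 → ι → ℝ}
    (hq : ∀ l, 0 ≤ q l) (hq1 : ∑ l, q l = 1) (hnb : IsNSBox nb)
    (hC : ∀ c z l, 0 ≤ pC c z l) (hC1 : ∀ z l, ∑ c : Fin 2, pC c z l = 1)
    (hp : ∀ a b c x z, p a b c x z = ∑ l, q l * nb a b x l * pC c z l) : MemS1ABo p := by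
  obtain ⟨hnb0, hnb1, hA, hB⟩ := hnb
  let e := (Fintype.equivFin ι).symm
  exact ⟨Fintype.card ι, q ∘ e, fun a b x l => nb a b x (e l), fun c z l => pC c z (e l),
    ⟨fun l => hq (e l), (e.sum_comp q).trans hq1⟩,
    ⟨fun a b x l => hnb0 a b x (e l), fun x l => hnb1 x (e l),
      fun a x l l' => hA a x (e l) (e l'), fun b x x' l => hB b x x' (e l)⟩,
    fun c z l => hC c z (e l), fun z l => hC1 z (e l),
    fun a b c x z => (hp a b c x z).trans
      (e.sum_comp fun l => q l * nb a b x l * pC c z l).symm⟩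

lemma isNSBox_of_uniform_marginal {X Y : Type} [Fintype X] [Fintype Y] {r : Fin 2 → X → Y → ℝ}
    (hr : ∀ a x y, r a x y ∈ Set.Icc 0 (1 / 2))
    (hsum : ∀ x x' y, ∑ a : Fin 2, r a x y = ∑ a : Fin 2, r a x' y) :
    IsNSBox fun a b x y => ![r a x y, 1 / 2 - r a x y] b := by
  refine ⟨fun a b x y => ?_, fun x y => ?_, fun a x y y' => ?_, fun b x x' y => ?_⟩
  · obtain ⟨h₀, h₁⟩ := hr a x y
    fin_cases b
    · exact h₀
    · exact sub_nonneg.mpr h₁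
  · simp only [Fin.sum_univ_two, Matrix.cons_val]; ring
  · simp only [Fin.sum_univ_two, Matrix.cons_val]; ring
  · have h := hsum x x' y
    fin_cases b
    · exact h
    · simp only [Fin.mk_one, cons_val_one, cons_val_fin_one, sum_sub_distrib, h]

/-- The probability that Alice gets `a` and Bob gets `0` in the no-signalling box replacing their
source, on input `x` for Alice and the deterministic strategy `l` of Charlie (`l.1` is his answer
to `z = 0` and `l.2` his answer to `z = 1`) for Bob. Given `b = 0`, Alice's bias is `sin 2θ` times
Charlie's sign for `x = z = 0` and the opposite of Charlie's sign for `x = z = 1`, as in `p_θ`. -/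
noncomputable def boxBobZero (θ : ℝ) (a x : Fin 2) (l : Fin 2 × Fin 2) : ℝ :=
  (1 + outcomeSign l.2 * Real.cos (2 * θ)) *
    (1 + outcomeSign a * ![outcomeSign l.1 * Real.sin (2 * θ), -outcomeSign l.2] x) / 8

lemma one_add_mul_one_add_mem_Icc {u v : ℝ} (hu : |u| ≤ 1) (hv : |v| ≤ 1) :
    (1 + u) * (1 + v) ∈ Set.Icc 0 4 := by
  obtain ⟨hu₀, hu₁⟩ := abs_le.mp hu
  obtain ⟨hv₀, hv₁⟩ := abs_le.mp hv
  exact ⟨by nlinarith, by nlinarith⟩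

lemma boxBobZero_mem_Icc (θ : ℝ) (a x : Fin 2) (l : Fin 2 × Fin 2) :
    boxBobZero θ a x l ∈ Set.Icc 0 (1 / 2) := by
  have hBob : |outcomeSign l.2 * Real.cos (2 * θ)| ≤ 1 := by
    simpa only [abs_mul, abs_outcomeSign, one_mul] using Real.abs_cos_le_one (2 * θ)
  have hAlice :
      |outcomeSign a * ![outcomeSign l.1 * Real.sin (2 * θ), -outcomeSign l.2] x| ≤ 1 := by
    fin_cases x
    · simpa [abs_mul, abs_outcomeSign] using Real.abs_sin_le_one (2 * θ)
    · simp [abs_mul, abs_outcomeSign]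
  obtain ⟨h₀, h₄⟩ := one_add_mul_one_add_mem_Icc hBob hAlice
  rw [boxBobZero]
  exact ⟨by linarith, by linarith⟩

lemma pTheta_zero_eq_sum_boxBobZero (θ : ℝ) (a c x z : Fin 2) :
    pTheta θ a 0 c x z =
      ∑ l : Fin 2 × Fin 2, 1 / 4 * boxBobZero θ a x l * if ![l.1, l.2] z = c then 1 else 0 := by
  rw [pTheta_zero]
  fin_cases x <;> fin_cases z <;> fin_cases c <;>
    simp [Fintype.sum_prod_type, boxBobZero] <;> ring

lemma memS1ABo_pTheta (θ : ℝ) : MemS1ABo (pTheta θ) := by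
  have hbox : IsNSBox fun a b x l => ![boxBobZero θ a x l, 1 / 2 - boxBobZero θ a x l] b :=
    isNSBox_of_uniform_marginal (boxBobZero_mem_Icc θ) fun x x' l => by
      simp only [boxBobZero, Fin.sum_univ_two, outcomeSign_zero, outcomeSign_one]; ring
  refine memS1ABo_of_fintype (q := fun _ => 1 / 4)
    (pC := fun c z (l : Fin 2 × Fin 2) => if ![l.1, l.2] z = c then 1 else 0)
    (fun _ => by norm_num) (by simp) hbox (fun _ _ _ => by split_ifs <;> norm_num)
    (fun _ _ => by simp) fun a b c x z => ?_
  fin_cases b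
  · exact pTheta_zero_eq_sum_boxBobZero θ a c x z
  · have huniform :
        ∑ l : Fin 2 × Fin 2, (1 / 8 : ℝ) * (if ![l.1, l.2] z = c then 1 else 0) = 1 / 4 := by
      fin_cases z <;> fin_cases c <;> norm_num [Fintype.sum_prod_type]
    simp only [Fin.mk_one, cons_val_one, cons_val_fin_one]
    rw [pTheta_one, pTheta_zero_eq_sum_boxBobZero, sub_eq_iff_eq_add, ← sum_add_distrib]
    exact huniform.symm.trans (sum_congr rfl fun _ _ => by ring)

lemma memS1BCo_pTheta (θ : ℝ) : MemS1BCo (pTheta θ) := by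
  simpa [pTheta_swap] using (memS1ABo_pTheta (Real.pi / 2 - θ)).swap

theorem pTheta_MNN_general (θ : ℝ) (hθ : Real.sin (4 * θ) ≠ 0) :
    ¬ MemS0 (pTheta θ) ∧ MemS1ABo (pTheta θ) ∧ MemS1BCo (pTheta θ) :=
  ⟨fun h => hθ (sin_four_mul_eq_zero_of_memS0_pTheta h), memS1ABo_pTheta θ, memS1BCo_pTheta θ⟩

lemma sin_four_mul_ne_zero {θ : ℝ} (h0 : 0 < θ) (h1 : θ < Real.pi / 2) (h2 : θ ≠ Real.pi / 4) :
    Real.sin (4 * θ) ≠ 0 := by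
  intro h
  rcases lt_or_gt_of_ne h2 with hlt | hgt
  · exact (Real.sin_pos_of_pos_of_lt_pi (by linarith) (by linarith)).ne' h
  · refine (Real.sin_pos_of_pos_of_lt_pi (x := 4 * θ - Real.pi) (by linarith) (by linarith)).ne' ?_
    rw [Real.sin_sub_pi, h, neg_zero]

/-- for `θ ∈ (0, π/2)` with `θ ≠ π/4`, the quantum correlation
`p_θ` is minimally network nonclassical. -/
theorem pTheta_MNN (θ : ℝ) (h0 : 0 < θ) (h1 : θ < Real.pi / 2) (h2 : θ ≠ Real.pi / 4) :
    ¬ MemS0 (pTheta θ) ∧ MemS1ABo (pTheta θ) ∧ MemS1BCo (pTheta θ) :=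
  pTheta_MNN_general θ (sin_four_mul_ne_zero h0 h1 h2)
end
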